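/- Let 𝒟_m(u,s) := (2/m) Σ_{l=1}^m cos((l−1/2)πu)·cos((l−1/2)πs). For every continuous f : [0,1]² → ℝ, m ∫_0^1 ∫_0^u 𝒟_m(s,u)² f(s,u) ds du → (1/2) ∫_0^1 f(s,s) ds as m → ∞. -/

import Mathlib

open Real Finset MeasureTheory

/-- The SIML kernel `𝒟_m(u,s) = (2/m) Σ_{l=1}^m cos((l−1/2)πu) cos((l−1/2)πs)`. -/
noncomputable def Dker (m : ℕ) (u s : ℝ) : ℝ :=
  (2 / (m : ℝ)) * ∑ l ∈ Finset.Icc 1 m,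
    Real.cos (((l : ℝ) - 1 / 2) * π * u) * Real.cos (((l : ℝ) - 1 / 2) * π * s)

/-!
For fixed `u ∈ (0, 1)` the functions `s ↦ m 𝒟_m(s, u)²` form an approximate identity on `[0, 1]`
at `u`. Orthogonality of the cosine modes makes `𝒟_m` a reproducing kernel, so their total mass is
`𝒟_m(u, u)`, which tends to `1`; and `|(cos πs - cos πu) 𝒟_m(s, u)| ≤ 2 / m` gives uniform decay
away from `u`. Since `𝒟_m` is symmetric, the integral over the triangle `s ≤ u` is half the integral
over the square of the integrand reflected across the diagonal; the limit is then taken in the inner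
integral and passed through the outer one by dominated convergence, using `𝒟_m(u, u) ≤ 2`.
-/

open Filter Topology

/-- The sum `cos θ + cos 3θ + ⋯ + cos (2m - 1)θ`, the Dirichlet-type kernel which gives `Dker` in
closed form. -/
noncomputable def oddCosSum (m : ℕ) (θ : ℝ) : ℝ :=
  ∑ l ∈ Finset.Icc 1 m, cos ((2 * (l : ℝ) - 1) * θ)

theorem oddCosSum_zero_right (m : ℕ) : oddCosSum m 0 = m := by
  simp [oddCosSum]

theorem abs_oddCosSum_le (m : ℕ) (θ : ℝ) : |oddCosSum m θ| ≤ m := by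
  calc |oddCosSum m θ| ≤ ∑ l ∈ Finset.Icc 1 m, |cos ((2 * (l : ℝ) - 1) * θ)| :=
        abs_sum_le_sum_abs _ _
    _ ≤ ∑ _l ∈ Finset.Icc 1 m, (1 : ℝ) := sum_le_sum fun _ _ ↦ abs_cos_le_one _
    _ = m := by simp

theorem two_mul_sin_mul_oddCosSum (m : ℕ) (θ : ℝ) :
    2 * sin θ * oddCosSum m θ = sin (2 * m * θ) := by
  induction m with
  | zero => simp [oddCosSum]
  | succ m ih =>
    have hsucc : oddCosSum (m + 1) θ = oddCosSum m θ + cos ((2 * ((m + 1 : ℕ) : ℝ) - 1) * θ) :=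
      sum_Icc_succ_top (Nat.le_add_left 1 m) _
    have hdiff := two_mul_sin_mul_cos θ ((2 * ((m + 1 : ℕ) : ℝ) - 1) * θ)
    rw [show θ - (2 * ((m + 1 : ℕ) : ℝ) - 1) * θ = -(2 * m * θ) by push_cast; ring,
      show θ + (2 * ((m + 1 : ℕ) : ℝ) - 1) * θ = 2 * ((m + 1 : ℕ) : ℝ) * θ by ring,
      sin_neg] at hdiff
    rw [hsucc, mul_add, ih, hdiff]
    ring

theorem Dker_eq_oddCosSum (m : ℕ) (s u : ℝ) :
    Dker m s u = (oddCosSum m (π / 2 * (s - u)) + oddCosSum m (π / 2 * (s + u))) / m := by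
  rw [Dker, oddCosSum, oddCosSum, ← sum_add_distrib, div_mul_eq_mul_div, mul_sum]
  congr 1
  refine sum_congr rfl fun l _ ↦ ?_
  rw [← mul_assoc, two_mul_cos_mul_cos]
  ring_nf

theorem Dker_comm (m : ℕ) (s u : ℝ) : Dker m s u = Dker m u s := by
  simp only [Dker, mul_comm]

theorem continuous_Dker (m : ℕ) : Continuous fun p : ℝ × ℝ ↦ Dker m p.1 p.2 := by
  unfold Dker
  fun_prop

theorem continuous_Dker_left (m : ℕ) (u : ℝ) : Continuous fun s ↦ Dker m s u := by
  unfold Dker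
  fun_prop

theorem abs_Dker_le_two (m : ℕ) (s u : ℝ) : |Dker m s u| ≤ 2 := by
  rw [Dker_eq_oddCosSum, abs_div, Nat.abs_cast]
  refine div_le_of_le_mul₀ m.cast_nonneg zero_le_two ?_
  rw [two_mul]
  exact (abs_add_le _ _).trans (add_le_add (abs_oddCosSum_le _ _) (abs_oddCosSum_le _ _))

theorem abs_cos_sub_cos_mul_Dker_le (m : ℕ) (s u : ℝ) :
    |(cos (π * s) - cos (π * u)) * Dker m s u| ≤ 2 / m := by
  set a := π / 2 * (s - u)
  set b := π / 2 * (s + u)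
  have hcos : cos (π * s) - cos (π * u) = -(2 * sin a * sin b) := by
    rw [two_mul_sin_mul_sin, show a - b = -(π * u) by ring, show a + b = π * s by ring, cos_neg]
    ring
  have hker : (cos (π * s) - cos (π * u)) * Dker m s u =
      -(sin b * sin (2 * m * a) + sin a * sin (2 * m * b)) / m := by
    rw [hcos, Dker_eq_oddCosSum, ← two_mul_sin_mul_oddCosSum m a, ← two_mul_sin_mul_oddCosSum m b]
    ring
  have hsin (x y : ℝ) : |sin x * sin y| ≤ 1 := by
    rw [abs_mul]
    exact mul_le_one₀ (abs_sin_le_one x) (abs_nonneg _) (abs_sin_le_one y)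
  rw [hker, abs_div, abs_neg, Nat.abs_cast]
  gcongr
  exact (abs_add_le _ _).trans ((add_le_add (hsin _ _) (hsin _ _)).trans_eq one_add_one_eq_two)

theorem Dker_self_eq {m : ℕ} (hm : m ≠ 0) (u : ℝ) :
    Dker m u u = 1 + oddCosSum m (π * u) / m := by
  have hm' : (m : ℝ) ≠ 0 := Nat.cast_ne_zero.2 hm
  rw [Dker_eq_oddCosSum, sub_self, mul_zero, oddCosSum_zero_right, add_div, div_self hm',
    show π / 2 * (u + u) = π * u by ring]

theorem tendsto_Dker_self {u : ℝ} (hu : u ∈ Set.Ioo (0 : ℝ) 1) :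
    Tendsto (fun m : ℕ ↦ Dker m u u) atTop (𝓝 1) := by
  have hsin : 0 < sin (π * u) :=
    sin_pos_of_pos_of_lt_pi (mul_pos pi_pos hu.1) (mul_lt_of_lt_one_right pi_pos hu.2)
  have hbound (m : ℕ) : |oddCosSum m (π * u)| ≤ 1 / (2 * sin (π * u)) := by
    rw [le_div_iff₀' (by positivity)]
    calc 2 * sin (π * u) * |oddCosSum m (π * u)| = |2 * sin (π * u) * oddCosSum m (π * u)| := by
          rw [abs_mul, abs_of_pos (by positivity : 0 < 2 * sin (π * u))]
      _ ≤ 1 := by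
          rw [two_mul_sin_mul_oddCosSum]
          exact abs_sin_le_one _
  have hzero : Tendsto (fun m : ℕ ↦ oddCosSum m (π * u) / m) atTop (𝓝 0) := by
    refine squeeze_zero_norm (fun m ↦ ?_)
      (tendsto_const_div_atTop_nhds_zero_nat (1 / (2 * sin (π * u))))
    rw [norm_eq_abs, abs_div, Nat.abs_cast]
    gcongr
    exact hbound m
  have hone : Tendsto (fun m : ℕ ↦ 1 + oddCosSum m (π * u) / m) atTop (𝓝 1) := by
    simpa only [add_zero] using hzero.const_add 1
  refine hone.congr' ?_
  filter_upwards [eventually_ne_atTop 0] with m hm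
  exact (Dker_self_eq hm u).symm

/-- The cosine mode `cos ((l - 1/2)πt)` out of which `Dker` is built; for `l ≥ 1` these are
orthogonal on `[0, 1]`. -/
noncomputable def cosMode (l : ℕ) (t : ℝ) : ℝ :=
  cos (((l : ℝ) - 1 / 2) * π * t)

theorem Dker_eq_sum_cosMode (m : ℕ) (s u : ℝ) :
    Dker m s u = 2 / m * ∑ l ∈ Finset.Icc 1 m, cosMode l s * cosMode l u :=
  rfl

theorem continuous_cosMode (l : ℕ) : Continuous (cosMode l) := by
  unfold cosMode
  fun_prop

theorem integral_cos_int_mul_pi (n : ℤ) :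
    ∫ s in (0 : ℝ)..1, cos (n * π * s) = if n = 0 then 1 else 0 := by
  split_ifs with hn
  · simp [hn]
  · have hnπ : (n : ℝ) * π ≠ 0 := mul_ne_zero (Int.cast_ne_zero.2 hn) pi_ne_zero
    rw [intervalIntegral.integral_comp_mul_left (fun x ↦ cos x) hnπ]
    simp [sin_int_mul_pi]

theorem integral_cosMode_mul_cosMode {k l : ℕ} (hk : 1 ≤ k) (hl : 1 ≤ l) :
    ∫ s in (0 : ℝ)..1, cosMode k s * cosMode l s = if k = l then 1 / 2 else 0 := by
  have hprod (s : ℝ) : cosMode k s * cosMode l s =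
      1 / 2 * (cos (((k - l : ℤ) : ℝ) * π * s) + cos (((k + l - 1 : ℤ) : ℝ) * π * s)) := by
    have h := two_mul_cos_mul_cos (((k : ℝ) - 1 / 2) * π * s) (((l : ℝ) - 1 / 2) * π * s)
    rw [← sub_mul, ← sub_mul, ← add_mul, ← add_mul] at h
    push_cast
    rw [show (k : ℝ) - l = (k : ℝ) - 1 / 2 - (l - 1 / 2) by ring,
      show (k : ℝ) + l - 1 = (k : ℝ) - 1 / 2 + (l - 1 / 2) by ring, ← h, cosMode, cosMode]
    ring
  have hdiff : (k : ℤ) - l = 0 ↔ k = l := by omega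
  have hsum : (k : ℤ) + l - 1 ≠ 0 := by omega
  simp only [hprod]
  rw [intervalIntegral.integral_const_mul, intervalIntegral.integral_add
    (Continuous.intervalIntegrable (by fun_prop) _ _)
    (Continuous.intervalIntegrable (by fun_prop) _ _),
    integral_cos_int_mul_pi, integral_cos_int_mul_pi, if_neg hsum]
  simp [hdiff]

theorem mul_integral_cosMode_mul_Dker {m k : ℕ} (hk : k ∈ Finset.Icc 1 m) (v : ℝ) :
    m * ∫ s in (0 : ℝ)..1, cosMode k s * Dker m s v = cosMode k v := by
  have hm : (m : ℝ) ≠ 0 := by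
    have := Finset.mem_Icc.1 hk
    exact Nat.cast_ne_zero.2 (by omega)
  have hexpand (s : ℝ) : cosMode k s * Dker m s v =
      ∑ l ∈ Finset.Icc 1 m, 2 / m * cosMode l v * (cosMode k s * cosMode l s) := by
    rw [Dker_eq_sum_cosMode, mul_sum, mul_sum]
    exact sum_congr rfl fun l _ ↦ by ring
  have hcont (l : ℕ) : Continuous fun s ↦ 2 / m * cosMode l v * (cosMode k s * cosMode l s) :=
    continuous_const.mul ((continuous_cosMode k).mul (continuous_cosMode l))
  simp only [hexpand]
  rw [intervalIntegral.integral_finsetSum fun l _ ↦ (hcont l).intervalIntegrable _ _]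
  simp only [intervalIntegral.integral_const_mul]
  rw [sum_congr rfl fun l hl ↦ by
    rw [integral_cosMode_mul_cosMode (Finset.mem_Icc.1 hk).1 (Finset.mem_Icc.1 hl).1, mul_ite,
      mul_zero], sum_ite_eq, if_pos hk]
  field_simp

theorem mul_integral_Dker_mul_Dker (m : ℕ) (u v : ℝ) :
    m * ∫ s in (0 : ℝ)..1, Dker m s u * Dker m s v = Dker m u v := by
  have hexpand (s : ℝ) : Dker m s u * Dker m s v =
      ∑ k ∈ Finset.Icc 1 m, 2 / m * cosMode k u * (cosMode k s * Dker m s v) := by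
    rw [Dker_eq_sum_cosMode m s u, mul_sum, sum_mul]
    exact sum_congr rfl fun l _ ↦ by ring
  have hcont (k : ℕ) : Continuous fun s ↦ 2 / m * cosMode k u * (cosMode k s * Dker m s v) :=
    continuous_const.mul ((continuous_cosMode k).mul (continuous_Dker_left m v))
  simp only [hexpand]
  rw [intervalIntegral.integral_finsetSum fun k _ ↦ (hcont k).intervalIntegrable _ _, mul_sum,
    Dker_eq_sum_cosMode, mul_sum]
  refine sum_congr rfl fun k hk ↦ ?_
  rw [intervalIntegral.integral_const_mul, mul_left_comm, mul_integral_cosMode_mul_Dker hk,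
    mul_assoc]

theorem integral_mul_Dker_sq (m : ℕ) (u : ℝ) :
    ∫ s in (0 : ℝ)..1, m * Dker m s u ^ 2 = Dker m u u := by
  simp only [intervalIntegral.integral_const_mul, sq, mul_integral_Dker_mul_Dker]

theorem exists_pos_forall_le_abs_cos_sub_cos {u : ℝ} (hu : u ∈ Set.Icc (0 : ℝ) 1) {U : Set ℝ}
    (hU : IsOpen U) (huU : u ∈ U) :
    ∃ δ > 0, ∀ s ∈ Set.Icc (0 : ℝ) 1 \ U, δ ≤ |cos (π * s) - cos (π * u)| := by
  have hmem {t : ℝ} (ht : t ∈ Set.Icc (0 : ℝ) 1) : π * t ∈ Set.Icc 0 π :=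
    ⟨mul_nonneg pi_pos.le ht.1, mul_le_of_le_one_right pi_pos.le ht.2⟩
  refine (isCompact_Icc.diff hU).exists_forall_le'
    (by fun_prop : Continuous fun s ↦ |cos (π * s) - cos (π * u)|).continuousOn fun s hs ↦ ?_
  refine abs_pos.2 (sub_ne_zero.2 fun hcos ↦ hs.2 ?_)
  rwa [mul_left_cancel₀ pi_ne_zero (injOn_cos (hmem hs.1) (hmem hu) hcos)]

theorem tendstoUniformlyOn_mul_Dker_sq {u : ℝ} (hu : u ∈ Set.Icc (0 : ℝ) 1) {U : Set ℝ}
    (hU : IsOpen U) (huU : u ∈ U) :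
    TendstoUniformlyOn (fun (m : ℕ) s ↦ m * Dker m s u ^ 2) 0 atTop (Set.Icc 0 1 \ U) := by
  obtain ⟨δ, hδ, hδ_le⟩ := exists_pos_forall_le_abs_cos_sub_cos hu hU huU
  have hbound (m : ℕ) (s : ℝ) (hs : s ∈ Set.Icc (0 : ℝ) 1 \ U) :
      (m : ℝ) * Dker m s u ^ 2 ≤ 4 / δ ^ 2 / m := by
    have hker : δ * |Dker m s u| ≤ 2 / m := by
      refine le_trans ?_ (abs_cos_sub_cos_mul_Dker_le m s u)
      rw [abs_mul]
      gcongr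
      exact hδ_le s hs
    rw [div_right_comm, le_div_iff₀ (by positivity)]
    calc (m : ℝ) * Dker m s u ^ 2 * δ ^ 2 = m * (δ * |Dker m s u|) ^ 2 := by
          rw [mul_pow, sq_abs]
          ring
      _ ≤ (m : ℝ) * (2 / m) ^ 2 := by gcongr
      _ = 4 / m := by
          rcases eq_or_ne (m : ℝ) 0 with hm | hm
          · simp [hm]
          · field_simp
            norm_num
  rw [Metric.tendstoUniformlyOn_iff]
  intro ε hε
  filter_upwards [(tendsto_const_div_atTop_nhds_zero_nat (4 / δ ^ 2)).eventually_lt_const hε]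
    with m hm s hs
  rw [Pi.zero_apply, dist_zero_left, norm_of_nonneg (by positivity)]
  exact (hbound m s hs).trans_lt hm

theorem ae_restrict_Ioc_mem_Ioo {a b : ℝ} :
    ∀ᵐ u ∂volume.restrict (Set.Ioc a b), u ∈ Set.Ioo a b := by
  rw [← restrict_Ioo_eq_restrict_Ioc]
  exact ae_restrict_mem measurableSet_Ioo

section Triangle

variable {E : Type*} [NormedAddCommGroup E] {a b : ℝ} {g : ℝ × ℝ → E}

/-- The triangle `a < s ≤ u ≤ b`, the domain of an iterated integral `∫ u in a..b, ∫ s in a..u`;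
half-open to match the sets `Ioc` underlying interval integrals. -/
def triangle (a b : ℝ) : Set (ℝ × ℝ) :=
  {p | a < p.1 ∧ p.1 ≤ p.2 ∧ p.2 ≤ b}

/-- The reflection of a pair into the half-plane `s ≤ u`, used to extend a function on a triangle
symmetrically to the square. -/
def sortPair (p : ℝ × ℝ) : ℝ × ℝ :=
  (min p.1 p.2, max p.1 p.2)

theorem continuous_sortPair : Continuous sortPair := by
  unfold sortPair
  fun_prop

theorem sortPair_diag (u : ℝ) : sortPair (u, u) = (u, u) := by
  simp [sortPair]

theorem sortPair_swap (p : ℝ × ℝ) : sortPair p.swap = sortPair p := by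
  simp [sortPair, min_comm, max_comm]

theorem sortPair_of_mem_triangle {p : ℝ × ℝ} (hp : p ∈ triangle a b) : sortPair p = p := by
  simp [sortPair, hp.2.1]

theorem measurableSet_triangle : MeasurableSet (triangle a b) := by
  unfold triangle
  measurability

theorem triangle_subset_prod_Ioc : triangle a b ⊆ Set.Ioc a b ×ˢ Set.Ioc a b :=
  fun _ ⟨ha, hle, hb⟩ ↦ ⟨⟨ha, hle.trans hb⟩, ha.trans_le hle, hb⟩

theorem mapsTo_sortPair_triangle :
    Set.MapsTo sortPair (Set.Ioc a b ×ˢ Set.Ioc a b) (triangle a b) :=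
  fun _ ⟨hs, hu⟩ ↦ ⟨lt_min hs.1 hu.1, min_le_max, max_le hs.2 hu.2⟩

theorem triangle_union_preimage_swap :
    triangle a b ∪ Prod.swap ⁻¹' triangle a b = Set.Ioc a b ×ˢ Set.Ioc a b := by
  ext ⟨s, u⟩
  simp only [triangle, Set.mem_union, Set.mem_preimage, Set.mem_ofPred_eq, Prod.swap,
    Set.mem_prod, Set.mem_Ioc]
  grind

theorem aedisjoint_triangle_preimage_swap :
    AEDisjoint volume (triangle a b) (Prod.swap ⁻¹' triangle a b) := by
  refine measure_mono_null (t := {p : ℝ × ℝ | p.1 = p.2})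
    (fun p ⟨hp, hp'⟩ ↦ le_antisymm hp.2.1 hp'.2.1) ?_
  rw [Measure.volume_eq_prod,
    Measure.measure_prod_null (measurableSet_eq_fun measurable_fst measurable_snd)]
  exact .of_forall fun s ↦ by simp [Set.preimage]

theorem integrableOn_comp_sortPair (hg : IntegrableOn g (triangle a b)) :
    IntegrableOn (g ∘ sortPair) (Set.Ioc a b ×ˢ Set.Ioc a b) := by
  rw [← triangle_union_preimage_swap, integrableOn_union]
  constructor
  · exact hg.congr_fun (fun p hp ↦ congrArg g (sortPair_of_mem_triangle hp).symm)
      measurableSet_triangle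
  · refine ((Measure.measurePreserving_swap.integrableOn_comp_preimage
      MeasurableEquiv.prodComm.measurableEmbedding).2 hg).congr_fun (fun p hp ↦ ?_)
      (measurable_swap measurableSet_triangle)
    rw [Function.comp_apply, Function.comp_apply, ← sortPair_swap, sortPair_of_mem_triangle hp]

theorem continuousAt_comp_sortPair {X : Type*} [TopologicalSpace X] {g : ℝ × ℝ → X} {u : ℝ}
    (hu : u ∈ Set.Ioo a b) (hg : ContinuousWithinAt g (triangle a b) (u, u)) :
    ContinuousAt (fun s ↦ g (sortPair (s, u))) u := by
  have hmaps : Set.MapsTo (fun s ↦ sortPair (s, u)) (Set.Ioc a b) (triangle a b) :=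
    fun s hs ↦ mapsTo_sortPair_triangle ⟨hs, Set.Ioo_subset_Ioc_self hu⟩
  have hcont : Continuous fun s ↦ sortPair (s, u) :=
    continuous_sortPair.comp (Continuous.prodMk_left u)
  rw [← sortPair_diag] at hg
  exact (hg.comp (f := fun s ↦ sortPair (s, u)) hcont.continuousWithinAt hmaps).continuousAt
    (Ioc_mem_nhds hu.1 hu.2)

variable [NormedSpace ℝ E]

theorem setIntegral_prod_Ioc_comp_sortPair (hg : IntegrableOn g (triangle a b)) :
    ∫ p in Set.Ioc a b ×ˢ Set.Ioc a b, g (sortPair p) = (2 : ℝ) • ∫ p in triangle a b, g p := by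
  have hsort : IntegrableOn (fun p ↦ g (sortPair p)) _ := integrableOn_comp_sortPair hg
  rw [← triangle_union_preimage_swap] at hsort ⊢
  have hupper : ∫ p in triangle a b, g (sortPair p) = ∫ p in triangle a b, g p :=
    setIntegral_congr_fun measurableSet_triangle fun p hp ↦
      congrArg g (sortPair_of_mem_triangle hp)
  have hlower : ∫ p in Prod.swap ⁻¹' triangle a b, g (sortPair p) = ∫ p in triangle a b, g p := by
    have hswap : MeasurePreserving (Prod.swap : ℝ × ℝ → ℝ × ℝ) volume volume :=
      Measure.measurePreserving_swap
    rw [← hupper]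
    simpa only [sortPair_swap] using hswap.setIntegral_preimage_emb
      MeasurableEquiv.prodComm.measurableEmbedding (fun p ↦ g (sortPair p)) (triangle a b)
  rw [setIntegral_union₀ aedisjoint_triangle_preimage_swap
    (measurable_swap measurableSet_triangle).nullMeasurableSet hsort.left_of_union
    hsort.right_of_union, hupper, hlower, two_smul]

theorem setIntegral_prod_Ioc (hab : a ≤ b) (hg : IntegrableOn g (Set.Ioc a b ×ˢ Set.Ioc a b)) :
    ∫ p in Set.Ioc a b ×ˢ Set.Ioc a b, g p = ∫ u in a..b, ∫ s in a..b, g (s, u) := by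
  simp only [intervalIntegral.integral_of_le hab]
  rw [IntegrableOn, Measure.volume_eq_prod, ← Measure.prod_restrict] at hg
  rw [Measure.volume_eq_prod, ← Measure.prod_restrict, integral_prod_symm _ hg]

theorem setIntegral_triangle (hab : a ≤ b) (hg : IntegrableOn g (triangle a b)) :
    ∫ p in triangle a b, g p = ∫ u in a..b, ∫ s in a..u, g (s, u) := by
  have hind : IntegrableOn ((triangle a b).indicator g) (Set.Ioc a b ×ˢ Set.Ioc a b) :=
    ((integrable_indicator_iff measurableSet_triangle).2 hg).integrableOn
  have hslice {u : ℝ} (hu : u ∈ Set.Ioc a b) :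
      ∫ s in a..b, (triangle a b).indicator g (s, u) = ∫ s in a..u, g (s, u) := by
    have hfun : (fun s ↦ (triangle a b).indicator g (s, u)) =
        (Set.Ioc a u).indicator fun s ↦ g (s, u) := by
      ext s
      simp [Set.indicator_apply, triangle, hu.2]
    rw [hfun, intervalIntegral.integral_of_le hab, setIntegral_indicator measurableSet_Ioc,
      intervalIntegral.integral_of_le hu.1.le,
      Set.inter_eq_right.2 (Set.Ioc_subset_Ioc_right hu.2)]
  rw [← Set.inter_eq_right.2 triangle_subset_prod_Ioc, ← setIntegral_indicator
    measurableSet_triangle, setIntegral_prod_Ioc hab hind, intervalIntegral.integral_of_le hab,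
    intervalIntegral.integral_of_le hab]
  exact setIntegral_congr_fun measurableSet_Ioc fun u hu ↦ hslice hu

theorem integral_integral_triangle_eq_half (hab : a ≤ b) (hg : IntegrableOn g (triangle a b)) :
    ∫ u in a..b, ∫ s in a..u, g (s, u) =
      (1 / 2 : ℝ) • ∫ u in a..b, ∫ s in a..b, g (sortPair (s, u)) := by
  have hsquare := setIntegral_prod_Ioc hab (integrableOn_comp_sortPair hg)
  simp only [Function.comp_apply] at hsquare
  rw [← setIntegral_triangle hab hg, ← hsquare, setIntegral_prod_Ioc_comp_sortPair hg, smul_smul]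
  norm_num

end Triangle

section Concentration

variable {E : Type*} [NormedAddCommGroup E] [NormedSpace ℝ E]

theorem Dker_sortPair (m : ℕ) (p : ℝ × ℝ) :
    Dker m (sortPair p).1 (sortPair p).2 = Dker m p.1 p.2 := by
  rcases le_total p.1 p.2 with hp | hp
  · simp [sortPair, hp]
  · simp [sortPair, hp, Dker_comm m p.1]

theorem integrableOn_mul_Dker_sq_smul {F : ℝ × ℝ → E} {S : Set (ℝ × ℝ)} (hF : IntegrableOn F S)
    (m : ℕ) : IntegrableOn (fun p ↦ (m * Dker m p.1 p.2 ^ 2) • F p) S := by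
  refine hF.bdd_smul (m * 2 ^ 2)
    (continuous_const.mul ((continuous_Dker m).pow 2)).aestronglyMeasurable (.of_forall fun p ↦ ?_)
  rw [norm_mul, norm_pow, norm_natCast, norm_eq_abs]
  gcongr
  exact abs_Dker_le_two _ _ _

theorem tendsto_integral_mul_Dker_sq_smul [CompleteSpace E] {h : ℝ → E} {u : ℝ}
    (hu : u ∈ Set.Ioo (0 : ℝ) 1) (hint : IntervalIntegrable h volume 0 1)
    (hcont : ContinuousAt h u) :
    Tendsto (fun m : ℕ ↦ ∫ s in (0 : ℝ)..1, (m * Dker m s u ^ 2) • h s) atTop (𝓝 (h u)) := by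
  have hmass :
      Tendsto (fun m : ℕ ↦ ∫ s in Set.Ioc (0 : ℝ) 1, m * Dker m s u ^ 2) atTop (𝓝 1) := by
    simpa only [← intervalIntegral.integral_of_le zero_le_one, integral_mul_Dker_sq] using
      tendsto_Dker_self hu
  have hmeas (m : ℕ) : Continuous fun s ↦ m * Dker m s u ^ 2 :=
    continuous_const.mul ((continuous_Dker_left m u).pow 2)
  simp only [intervalIntegral.integral_of_le zero_le_one]
  exact tendsto_setIntegral_peak_smul_of_integrableOn_of_tendsto measurableSet_Ioc
    measurableSet_Ioc subset_rfl self_mem_nhdsWithin measure_Ioc_lt_top.ne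
    (.of_forall fun m s _ ↦ by positivity)
    (fun U hU huU ↦ (tendstoUniformlyOn_mul_Dker_sq (Set.Ioo_subset_Icc_self hu) hU huU).mono
      (Set.sdiff_subset_sdiff_left Set.Ioc_subset_Icc_self))
    hmass (.of_forall fun m ↦ (hmeas m).aestronglyMeasurable) hint.1 hcont.continuousWithinAt

theorem norm_integral_mul_Dker_sq_smul_le {h : ℝ → E} {M : ℝ}
    (hM : ∀ s ∈ Set.Ioc (0 : ℝ) 1, ‖h s‖ ≤ M) (m : ℕ) (u : ℝ) :
    ‖∫ s in (0 : ℝ)..1, (m * Dker m s u ^ 2) • h s‖ ≤ 2 * M := by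
  have hM0 : 0 ≤ M := (norm_nonneg _).trans (hM 1 (by simp))
  have hcont : Continuous fun s ↦ m * Dker m s u ^ 2 * M :=
    (continuous_const.mul ((continuous_Dker_left m u).pow 2)).mul_const M
  calc ‖∫ s in (0 : ℝ)..1, (m * Dker m s u ^ 2) • h s‖
      ≤ ∫ s in (0 : ℝ)..1, m * Dker m s u ^ 2 * M := by
        refine intervalIntegral.norm_integral_le_of_norm_le zero_le_one
          (.of_forall fun s hs ↦ ?_) (hcont.intervalIntegrable _ _)
        rw [norm_smul, norm_of_nonneg (by positivity)]
        gcongr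
        exact hM s hs
    _ = Dker m u u * M := by rw [intervalIntegral.integral_mul_const, integral_mul_Dker_sq]
    _ ≤ 2 * M := by
        gcongr
        exact (le_abs_self _).trans (abs_Dker_le_two m u u)

theorem tendsto_integral_integral_mul_Dker_sq_smul [CompleteSpace E] {F : ℝ × ℝ → E} {M : ℝ}
    (hint : IntegrableOn F (Set.Ioc 0 1 ×ˢ Set.Ioc 0 1))
    (hM : ∀ p ∈ Set.Ioc (0 : ℝ) 1 ×ˢ Set.Ioc (0 : ℝ) 1, ‖F p‖ ≤ M)
    (hcont : ∀ᵐ u ∂volume.restrict (Set.Ioc 0 1), ContinuousAt (fun s ↦ F (s, u)) u) :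
    Tendsto (fun m : ℕ ↦ ∫ u in (0 : ℝ)..1, ∫ s in (0 : ℝ)..1, (m * Dker m s u ^ 2) • F (s, u))
      atTop (𝓝 (∫ u in (0 : ℝ)..1, F (u, u))) := by
  have hprod {G : ℝ × ℝ → E} (hG : IntegrableOn G (Set.Ioc 0 1 ×ˢ Set.Ioc 0 1)) :
      Integrable G ((volume.restrict (Set.Ioc 0 1)).prod (volume.restrict (Set.Ioc 0 1))) := by
    rwa [Measure.prod_restrict]
  simp only [intervalIntegral.integral_of_le zero_le_one]
  refine tendsto_integral_filter_of_dominated_convergence (fun _ ↦ 2 * M)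
    (.of_forall fun m ↦ ?_) (.of_forall fun m ↦ ?_) (integrable_const _) ?_
  · exact (hprod (integrableOn_mul_Dker_sq_smul hint m)).integral_prod_right.aestronglyMeasurable
  · filter_upwards [ae_restrict_mem measurableSet_Ioc] with u hu
    rw [← intervalIntegral.integral_of_le zero_le_one]
    exact norm_integral_mul_Dker_sq_smul_le (fun s hs ↦ hM (s, u) ⟨hs, hu⟩) m u
  · filter_upwards [ae_restrict_Ioc_mem_Ioo, (hprod hint).prod_left_ae, hcont]
      with u hu hu_int hu_cont
    simp only [← intervalIntegral.integral_of_le zero_le_one]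
    exact tendsto_integral_mul_Dker_sq_smul hu
      ((intervalIntegrable_iff_integrableOn_Ioc_of_le zero_le_one).2 hu_int) hu_cont

end Concentration

theorem stmt17_general {E : Type*} [NormedAddCommGroup E] [NormedSpace ℝ E] [CompleteSpace E]
    {f : ℝ × ℝ → E} {M : ℝ} (hint : IntegrableOn f (triangle 0 1))
    (hM : ∀ p ∈ triangle 0 1, ‖f p‖ ≤ M)
    (hcont : ∀ᵐ u ∂volume.restrict (Set.Ioc 0 1), ContinuousWithinAt f (triangle 0 1) (u, u)) :
    Tendsto
      (fun m : ℕ ↦ (m : ℝ) • ∫ u in (0 : ℝ)..1, ∫ s in (0 : ℝ)..u, Dker m s u ^ 2 • f (s, u))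
      atTop (𝓝 ((1 / 2 : ℝ) • ∫ s in (0 : ℝ)..1, f (s, s))) := by
  have hcont_sort : ∀ᵐ u ∂volume.restrict (Set.Ioc 0 1),
      ContinuousAt (fun s ↦ f (sortPair (s, u))) u := by
    filter_upwards [ae_restrict_Ioc_mem_Ioo, hcont] with u hu hu_cont
    exact continuousAt_comp_sortPair hu hu_cont
  have hsquare := tendsto_integral_integral_mul_Dker_sq_smul (integrableOn_comp_sortPair hint)
    (fun p hp ↦ hM _ (mapsTo_sortPair_triangle hp)) hcont_sort
  simp only [Function.comp_apply, sortPair_diag] at hsquare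
  refine (hsquare.const_smul (1 / 2 : ℝ)).congr fun m ↦ ?_
  have hhalf := integral_integral_triangle_eq_half zero_le_one
    (integrableOn_mul_Dker_sq_smul hint m)
  simp only [Dker_sortPair] at hhalf
  rw [← hhalf]
  simp only [mul_smul, intervalIntegral.integral_smul]

theorem stmt17 (f : ℝ × ℝ → ℝ) (hf : ContinuousOn f (Set.Icc 0 1 ×ˢ Set.Icc 0 1)) :
    Filter.Tendsto
      (fun m : ℕ => (m : ℝ) * ∫ u in (0:ℝ)..1, ∫ s in (0:ℝ)..u, (Dker m s u) ^ 2 * f (s, u))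
      Filter.atTop (nhds ((1 / 2) * ∫ s in (0:ℝ)..1, f (s, s))) := by
  have hsub : triangle 0 1 ⊆ Set.Icc 0 1 ×ˢ Set.Icc 0 1 := triangle_subset_prod_Ioc.trans
    (Set.prod_mono Set.Ioc_subset_Icc_self Set.Ioc_subset_Icc_self)
  have hcompact : IsCompact (Set.Icc (0 : ℝ) 1 ×ˢ Set.Icc (0 : ℝ) 1) :=
    isCompact_Icc.prod isCompact_Icc
  obtain ⟨M, hM⟩ := hcompact.exists_bound_of_continuousOn hf
  refine stmt17_general ((hf.integrableOn_compact hcompact).mono_set hsub)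
    (fun p hp ↦ hM p (hsub hp)) ?_
  filter_upwards [ae_restrict_mem measurableSet_Ioc] with u hu
  have hu' := Set.Ioc_subset_Icc_self hu
  exact (hf (u, u) ⟨hu', hu'⟩).mono hsub
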